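/- Let G be a nonempty open connected subset of ℝ² and let p, q be coprime real polynomials in two variables with q ≠ 0, such that p/q is bounded on {v ∈ G : q(v) ≠ 0} (i.e. there is M with |p(v)/q(v)| ≤ M for all v ∈ G with q(v) ≠ 0). Then q has constant sign on G: for all a, b ∈ G, q(a)·q(b) ≥ 0. -/

import Mathlib

open MvPolynomial Filter Topology

/-- Evaluation of a two-variable real polynomial at a point of `ℝ²`. -/
noncomputable def pev (p : MvPolynomial (Fin 2) ℝ) (v : ℝ × ℝ) : ℝ :=
  MvPolynomial.eval ![v.1, v.2] p

/-!
Boundedness of `p / q` forces `p` to vanish at every zero of `q` in `G`: the points where `q ≠ 0`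
are dense, and near a zero of `q` they satisfy `|p| ≤ M |q|`. The zeros of `q` in `G` are therefore
common zeros of `p` and `q`. By Gauss's lemma `p` and `q` stay coprime over the field of rational
functions in either coordinate, so a Bézout identity with cleared denominators gives a nonzero
polynomial in that coordinate alone vanishing at all common zeros, of which there are hence finitely
many. Removing finitely many points does not disconnect `G`, and `q` has no zeros on what remains.
-/

section Elimination

variable {R : Type*} [CommRing R] [IsDomain R]

section FractionField

variable {K : Type*} [Field K] [Algebra R K] [IsFractionRing R K]

theorem exists_isPrimitive_associated_map [IsGCDMonoid R] {d : Polynomial K} (hd : d ≠ 0) :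
    ∃ e : Polynomial R, e.IsPrimitive ∧ Associated (e.map (algebraMap R K)) d := by
  let : NormalizedGCDMonoid R := Classical.arbitrary _
  let N := IsLocalization.integerNormalization (nonZeroDivisors R) d
  obtain ⟨c, hc, hN : N.map (algebraMap R K) = c • d⟩ :=
    IsLocalization.integerNormalization_spec (nonZeroDivisors R) d
  have isUnit_C {r : R} (hr : r ≠ 0) : IsUnit (Polynomial.C (algebraMap R K r)) :=
    Polynomial.isUnit_C.mpr (by simpa using hr)
  have content_ne_zero : N.content ≠ 0 := by
    rwa [Ne, Polynomial.content_eq_zero_iff, IsFractionRing.integerNormalization_eq_zero_iff]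
  have map_primPart : Polynomial.C (algebraMap R K N.content) * N.primPart.map (algebraMap R K) =
      Polynomial.C (algebraMap R K c) * d := by
    rw [← Polynomial.map_C, ← Polynomial.map_mul, ← N.eq_C_content_mul_primPart, hN,
      Algebra.smul_def, Polynomial.algebraMap_apply]
  refine ⟨N.primPart, N.isPrimitive_primPart, ?_⟩
  rw [← associated_isUnit_mul_left_iff (isUnit_C content_ne_zero), map_primPart]
  exact associated_unit_mul_left _ _ (isUnit_C (nonZeroDivisors.ne_zero hc))

theorem isCoprime_map_algebraMap_of_isRelPrime [IsGCDMonoid R] {f g : Polynomial R}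
    (h : IsRelPrime f g) :
    IsCoprime (f.map (algebraMap R K)) (g.map (algebraMap R K)) := by
  rw [← isRelPrime_iff_isCoprime]
  intro d hdf hdg
  obtain rfl | hd := eq_or_ne d 0
  · rw [zero_dvd_iff, Polynomial.map_eq_zero_iff (IsFractionRing.injective R K)] at hdf hdg
    exact absurd (h hdf.symm.dvd hdg.symm.dvd) not_isUnit_zero
  obtain ⟨e, he, hed⟩ := exists_isPrimitive_associated_map (R := R) hd
  have he_unit : IsUnit e :=
    h (he.dvd_of_fraction_map_dvd_fraction_map (hed.dvd.trans hdf))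
      (he.dvd_of_fraction_map_dvd_fraction_map (hed.dvd.trans hdg))
  exact hed.isUnit (he_unit.map (Polynomial.mapRingHom (algebraMap R K)))

theorem exists_mul_add_mul_eq_C_of_isCoprime_map {f g : Polynomial R}
    (h : IsCoprime (f.map (algebraMap R K)) (g.map (algebraMap R K))) :
    ∃ u v : Polynomial R, ∃ r : R, r ≠ 0 ∧ u * f + v * g = Polynomial.C r := by
  obtain ⟨a, b, hab⟩ := h
  obtain ⟨c, hc, hac⟩ := IsLocalization.integerNormalization_spec (nonZeroDivisors R) a
  obtain ⟨d, hd, hbd⟩ := IsLocalization.integerNormalization_spec (nonZeroDivisors R) b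
  set a' := IsLocalization.integerNormalization (nonZeroDivisors R) a
  set b' := IsLocalization.integerNormalization (nonZeroDivisors R) b
  refine ⟨Polynomial.C d * a', Polynomial.C c * b', c * d, nonZeroDivisors.ne_zero (mul_mem hc hd),
    Polynomial.map_injective _ (IsFractionRing.injective R K) ?_⟩
  simp only [Polynomial.map_add, Polynomial.map_mul, Polynomial.map_C, hac, hbd, Algebra.smul_def,
    Polynomial.algebraMap_apply, map_mul]
  linear_combination
    Polynomial.C (algebraMap R K c) * Polynomial.C (algebraMap R K d) * hab

end FractionField

variable [UniqueFactorizationMonoid R]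

theorem exists_mul_add_mul_eq_rename_of_isRelPrime {σ : Type*} (i : σ) {p q : MvPolynomial σ R}
    (h : IsRelPrime p q) :
    ∃ u v : MvPolynomial σ R, ∃ r : MvPolynomial {j // j ≠ i} R,
      r ≠ 0 ∧ u * p + v * q = rename (↑) r := by
  classical
  let e : MvPolynomial σ R ≃ₐ[R] Polynomial (MvPolynomial {j // j ≠ i} R) :=
    (renameEquiv R (Equiv.optionSubtypeNe i).symm).trans (optionEquivLeft R _)
  have he : e.symm.toAlgHom.comp Polynomial.CAlgHom = rename (↑) := by ext; simp [e]
  have hrel : IsRelPrime (e p) (e q) := IsRelPrime.of_map e.symm (by simpa using h)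
  obtain ⟨u, v, r, hr, huv⟩ := exists_mul_add_mul_eq_C_of_isCoprime_map
    (isCoprime_map_algebraMap_of_isRelPrime (K := FractionRing (MvPolynomial {j // j ≠ i} R)) hrel)
  refine ⟨e.symm u, e.symm v, r, hr, ?_⟩
  rw [← he]
  simpa using congrArg e.symm huv

theorem finite_image_apply_setOf_eval_eq_zero {p q : MvPolynomial (Fin 2) R} (h : IsRelPrime p q)
    (i : Fin 2) : ((· i) '' {x | eval x p = 0 ∧ eval x q = 0}).Finite := by
  have ne_rev_iff : ∀ i j : Fin 2, j ≠ i.rev ↔ j = i := by decide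
  obtain ⟨u, v, r, hr, huv⟩ := exists_mul_add_mul_eq_rename_of_isRelPrime i.rev h
  by_contra hinf
  refine hr (funext_set (fun _ ↦ _) (fun _ ↦ hinf) fun s hs ↦ ?_)
  obtain ⟨x, ⟨hp, hq⟩, hx⟩ := hs ⟨i, (ne_rev_iff i i).mpr rfl⟩ trivial
  obtain rfl : x ∘ (↑) = s := by
    funext ⟨j, hj⟩
    obtain rfl := (ne_rev_iff i j).mp hj
    exact hx
  rw [← eval_rename, ← huv]
  simp [hp, hq]

theorem finite_setOf_eval_eq_zero_of_isRelPrime {p q : MvPolynomial (Fin 2) R}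
    (h : IsRelPrime p q) : {x | eval x p = 0 ∧ eval x q = 0}.Finite :=
  (Set.Finite.pi' (finite_image_apply_setOf_eval_eq_zero h)).subset
    fun _ hx _ ↦ Set.mem_image_of_mem _ hx

end Elimination

theorem dense_setOf_eval_ne_zero {σ R : Type*} [CommRing R] [IsDomain R] [TopologicalSpace R]
    [T1Space R] [∀ x : R, NeBot (𝓝[≠] x)] {q : MvPolynomial σ R} (hq : q ≠ 0) :
    Dense {x | eval x q ≠ 0} := by
  change Dense {x | eval x q = 0}ᶜ
  rw [← interior_eq_empty_iff_dense_compl, Set.eq_empty_iff_forall_notMem]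
  intro x hx
  rw [mem_interior_iff_mem_nhds, nhds_pi, Filter.mem_pi] at hx
  obtain ⟨I, -, t, ht, hsub⟩ := hx
  refine hq (funext_set t (fun i ↦ infinite_of_mem_nhds (x i) (ht i)) fun y hy ↦ ?_)
  simpa using hsub fun i _ ↦ hy i trivial

theorem isPreconnected_diff_of_locally {X : Type*} [TopologicalSpace X] {U s : Set X}
    (hU : IsPreconnected U) (hUs : U ⊆ closure (U \ s))
    (hloc : ∀ x ∈ U, ∃ N ∈ 𝓝[U] x, N ⊆ U ∧ IsPreconnected (N \ s)) :
    IsPreconnected (U \ s) := by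
  intro V W hV hW hcover hVne hWne
  have hclosure : U ⊆ closure ((U \ s) ∩ V) ∪ closure ((U \ s) ∩ W) := by
    rwa [← closure_union, ← Set.inter_union_distrib_left, Set.inter_eq_left.mpr hcover]
  obtain ⟨x, hxU, hxV, hxW⟩ := isPreconnected_closed_iff.mp hU _ _ isClosed_closure
    isClosed_closure hclosure
    (hVne.mono fun y hy ↦ ⟨hy.1.1, subset_closure hy⟩)
    (hWne.mono fun y hy ↦ ⟨hy.1.1, subset_closure hy⟩)
  obtain ⟨N, hN, hNU, hNs⟩ := hloc x hxU
  obtain ⟨O, hO, hxO, hON⟩ := mem_nhdsWithin.mp hN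
  have meets {A : Set X} (hxA : x ∈ closure ((U \ s) ∩ A)) : ((N \ s) ∩ A).Nonempty := by
    obtain ⟨y, hyO, ⟨hyU, hys⟩, hyA⟩ := mem_closure_iff.mp hxA O hO hxO
    exact ⟨y, ⟨hON ⟨hyO, hyU⟩, hys⟩, hyA⟩
  have hsub : N \ s ⊆ U \ s := Set.sdiff_subset_sdiff_left hNU
  exact (hNs V W hV hW (hsub.trans hcover) (meets hxV) (meets hxW)).mono
    (Set.inter_subset_inter_left _ hsub)

section Countable

variable {E : Type*} [NormedAddCommGroup E] [NormedSpace ℝ E] {s : Set E}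

theorem isPreconnected_ball_diff_of_countable (hE : 1 < Module.rank ℝ E) (hs : s.Countable)
    (x : E) (r : ℝ) : IsPreconnected (Metric.ball x r \ s) := by
  obtain hr | hr := le_or_gt r 0
  · simp [Metric.ball_eq_empty.mpr hr, isPreconnected_empty]
  let φ : OpenPartialHomeomorph E E := OpenPartialHomeomorph.univBall x r
  have hφ_range : Set.range φ = Metric.ball x r := by
    rw [← Set.image_univ, ← OpenPartialHomeomorph.univBall_source x r,
      φ.image_source_eq_target, OpenPartialHomeomorph.univBall_target x hr]
  have hφ_inj : Function.Injective φ := by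
    simpa [φ, Set.injOn_univ] using φ.injOn
  have hφ_cont : Continuous φ := OpenPartialHomeomorph.continuous_univBall x r
  rw [← hφ_range, ← Set.image_compl_preimage]
  exact ((hs.preimage hφ_inj).isConnected_compl_of_one_lt_rank hE).isPreconnected.image φ
    hφ_cont.continuousOn

theorem isPreconnected_diff_of_countable (hE : 1 < Module.rank ℝ E) {U : Set E} (hUo : IsOpen U)
    (hU : IsPreconnected U) (hs : s.Countable) : IsPreconnected (U \ s) := by
  have : Nontrivial E := (rank_pos_iff_nontrivial (R := ℝ)).mp (zero_lt_one.trans hE)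
  refine isPreconnected_diff_of_locally hU ((hs.dense_compl ℝ).open_subset_closure_inter hUo)
    fun x hx ↦ ?_
  obtain ⟨r, hr, hball⟩ := Metric.isOpen_iff.mp hUo x hx
  exact ⟨Metric.ball x r, mem_nhdsWithin_of_mem_nhds (Metric.ball_mem_nhds x hr), hball,
    isPreconnected_ball_diff_of_countable hE hs x r⟩

end Countable

theorem eq_zero_of_frequently_norm_div_le {α 𝕜 : Type*} [NormedDivisionRing 𝕜] {l : Filter α}
    {f g : α → 𝕜} {a : 𝕜} {M : ℝ} (hf : Tendsto f l (𝓝 a)) (hg : Tendsto g l (𝓝 0))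
    (h : ∃ᶠ x in l, g x ≠ 0 ∧ ‖f x / g x‖ ≤ M) : a = 0 := by
  have hle : ∃ᶠ x in l, ‖f x‖ ≤ M * ‖g x‖ := h.mono fun x ⟨hx, hM⟩ ↦ by
    rwa [norm_div, div_le_iff₀ (norm_pos_iff.mpr hx)] at hM
  have : ‖a‖ ≤ M * ‖(0 : 𝕜)‖ :=
    le_of_tendsto_of_tendsto_of_frequently hf.norm (hg.norm.const_mul M) hle
  simpa using this

section Plane

variable {G : Set (ℝ × ℝ)} {p q : MvPolynomial (Fin 2) ℝ}

theorem continuous_pev (p : MvPolynomial (Fin 2) ℝ) : Continuous (pev p) :=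
  (continuous_eval p).comp Homeomorph.finTwoArrow.symm.continuous

theorem dense_setOf_pev_ne_zero (hq : q ≠ 0) : Dense {v | pev q v ≠ 0} :=
  (dense_setOf_eval_ne_zero hq).preimage Homeomorph.finTwoArrow.symm.isOpenMap

theorem finite_setOf_pev_eq_zero_of_isRelPrime (h : IsRelPrime p q) :
    {v | pev p v = 0 ∧ pev q v = 0}.Finite :=
  (finite_setOf_eval_eq_zero_of_isRelPrime h).preimage
    Homeomorph.finTwoArrow.symm.injective.injOn

theorem pev_eq_zero_of_bounded_div (hG : IsOpen G) (hq : q ≠ 0) {M : ℝ}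
    (hb : ∀ v ∈ G, pev q v ≠ 0 → |pev p v / pev q v| ≤ M) {v : ℝ × ℝ} (hv : v ∈ G)
    (hqv : pev q v = 0) : pev p v = 0 := by
  have hfreq : ∃ᶠ w in 𝓝 v, w ∈ G ∧ pev q w ≠ 0 :=
    mem_closure_iff_frequently.mp ((dense_setOf_pev_ne_zero hq).open_subset_closure_inter hG hv)
  exact eq_zero_of_frequently_norm_div_le ((continuous_pev p).tendsto v)
    (hqv ▸ (continuous_pev q).tendsto v) (hfreq.mono fun w ⟨hwG, hw⟩ ↦ ⟨hw, hb w hwG hw⟩)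

theorem denominator_constant_sign_general (hGo : IsOpen G) (hGc : IsPreconnected G)
    (hpq : IsRelPrime p q) (hzero : ∀ v ∈ G, pev q v = 0 → pev p v = 0) :
    ∀ a ∈ G, ∀ b ∈ G, 0 ≤ pev q a * pev q b := by
  intro a ha b hb
  set Z := {v | pev p v = 0 ∧ pev q v = 0}
  have mem_diff {v} (hv : v ∈ G) (hqv : pev q v ≠ 0) : v ∈ G \ Z := ⟨hv, fun h ↦ hqv h.2⟩
  have hne : ∀ v ∈ G \ Z, pev q v ≠ 0 := fun v hv h ↦ hv.2 ⟨hzero v hv.1 h, h⟩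
  have hGZ : IsPreconnected (G \ Z) := isPreconnected_diff_of_countable (by norm_num) hGo hGc
    (finite_setOf_pev_eq_zero_of_isRelPrime hpq).countable
  obtain hqa | hqa := eq_or_ne (pev q a) 0
  · simp [hqa]
  obtain hqb | hqb := eq_or_ne (pev q b) 0
  · simp [hqb]
  obtain hpos | hneg := hGZ.mapsTo_Ioi_or_Iio (continuous_pev q).continuousOn hne
  · exact (mul_pos (hpos (mem_diff ha hqa)) (hpos (mem_diff hb hqb))).le
  · exact (mul_pos_of_neg_of_neg (hneg (mem_diff ha hqa)) (hneg (mem_diff hb hqb))).le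

end Plane

/-- If `p/q` is bounded on an open connected (nonempty) set `G`, then `q` has constant
sign on `G`. -/
theorem denominator_constant_sign (G : Set (ℝ × ℝ)) (hGo : IsOpen G) (hGc : IsConnected G)
    (p q : MvPolynomial (Fin 2) ℝ) (hq : q ≠ 0)
    (hcop : ∀ d : MvPolynomial (Fin 2) ℝ, d ∣ p → d ∣ q → IsUnit d) (M : ℝ)
    (hb : ∀ v ∈ G, pev q v ≠ 0 → |pev p v / pev q v| ≤ M) :
    ∀ a ∈ G, ∀ b ∈ G, 0 ≤ pev q a * pev q b :=
  denominator_constant_sign_general hGo hGc.isPreconnected (fun _ ↦ hcop _)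
    fun _ ↦ pev_eq_zero_of_bounded_div hGo hq hb
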